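/- arXiv:math/0009081 — 2 statements merged into one kernel-verified Lean document; each statement's English description precedes it below -/
import Mathlib

section
/- There is a group isomorphism between Λ/F(Λ) and the group of continuous group homomorphisms from F⁻¹(Λ̂)/Λ̂ to the circle ℝ/ℤ, where F⁻¹(Λ̂)/Λ̂ carries the subspace topology inside the torus t/Λ̂. -/
open scoped RealInnerProductSpace

/-!
For a discrete subgroup `M` write `M'` for the subgroup of all `x` with `⟪x, m⟫ ∈ ℤ` for `m ∈ M`.
For nested subgroups `M ≤ Λ`, pairing with `l ∈ Λ` gives a character of `M' / Λ'`. Its kernel in `l`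
is `M'' ∩ Λ`, and `M'' = M`. It reaches every character because `M'` splits as `Vᗮ ⊕ ⨁ ℤ wᵢ`, where
`V` is the real span of `M` and `w` is the family in `V` dual to a basis `b` of `M`: a character of
the real vector space `Vᗮ` lifts to a linear functional, hence is the pairing with some `z ∈ Vᗮ`,
and adding to `z` multiples of the `bᵢ` adjusts the values at the `wᵢ` freely. So
`Λ / M ≃ Hom(M' / Λ', ℝ/ℤ)`. Since `⟪F x, L l⟫ = -⟪x, F l⟫`, the subgroup `F⁻¹(Λ')` is `F(Λ)'`, and
`M = F(Λ)` gives the theorem.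
-/

section Lifting

variable {V : Type*} [AddCommGroup V] [Module ℝ V] [TopologicalSpace V] [IsTopologicalAddGroup V]
  [ContinuousSMul ℝ V] [LocallyConvexSpace ℝ V]

theorem exists_continuousLinearMap_coe_eq (χ : V →ₜ+ UnitAddCircle) :
    ∃ f : V →L[ℝ] ℝ, ∀ x, (f x : UnitAddCircle) = χ x := by
  have hcov := AddCircle.isCoveringMap_coe (1 : ℝ)
  obtain ⟨f, ⟨hf_zero, hf⟩, -⟩ :=
    hcov.existsUnique_continuousMap_lifts χ.toContinuousMap (0 : V) (0 : ℝ) (map_zero χ).symm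
  have hf_coe : ∀ x, (f x : UnitAddCircle) = χ x := congrFun hf
  have hf_add : (fun p : V × V ↦ f (p.1 + p.2)) = fun p ↦ f p.1 + f p.2 := by
    refine hcov.eq_of_comp_eq (by fun_prop) (by fun_prop) ?_ 0 (by simp [hf_zero])
    ext p
    simp only [Function.comp_apply, AddCircle.coe_add, hf_coe, map_add]
  exact ⟨(AddMonoidHom.mk' f fun x y ↦ congrFun hf_add (x, y)).toRealLinearMap f.continuous,
    hf_coe⟩

end Lifting

theorem exists_linearIndependent_span_int_eq {E : Type*} [NormedAddCommGroup E] [NormedSpace ℝ E]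
    (M : Submodule ℤ E) [DiscreteTopology M] [Module.Finite ℤ M] :
    ∃ (n : ℕ) (b : Fin n → E),
      LinearIndependent ℝ b ∧ Submodule.span ℤ (Set.range b) = M := by
  let V := Submodule.span ℝ (M : Set E)
  have : FiniteDimensional ℝ V := by
    obtain ⟨s, hs⟩ := Module.Finite.iff_fg.mp ‹Module.Finite ℤ M›
    have : V = Submodule.span ℝ (s : Set E) := by
      simp only [V, ← hs, Submodule.span_span_of_tower]
    rw [this]
    exact FiniteDimensional.span_finset ℝ s
  let N : Submodule ℤ V := ZLattice.comap ℝ M V.subtype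
  have : DiscreteTopology N :=
    ZLattice.comap_discreteTopology ℝ M continuous_subtype_val V.injective_subtype
  have : IsZLattice ℝ N := ⟨by
    rw [ZLattice.coe_comap]
    exact Submodule.span_span_coe_preimage⟩
  have hN : N.map (V.subtype.restrictScalars ℤ) = M :=
    Submodule.map_comap_eq_self fun x hx ↦ ⟨⟨x, Submodule.subset_span hx⟩, rfl⟩
  let b := (Module.finBasis ℤ N).ofZLatticeBasis ℝ N
  refine ⟨_, V.subtype ∘ b, b.linearIndependent.map' _ V.ker_subtype, ?_⟩
  rw [Set.range_comp, ← hN, ← V.subtype.coe_restrictScalars ℤ, ← Submodule.map_span,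
    (Module.finBasis ℤ N).ofZLatticeBasis_span ℝ]

section InnerProductSpace

variable {t : Type*} [NormedAddCommGroup t] [InnerProductSpace ℝ t]

/-- The dual `Λ̂` of a subgroup `Λ` of a real inner product space: the vectors pairing
integrally with every element of `Λ`. -/
noncomputable def dualLattice (Λ : Submodule ℤ t) : Submodule ℤ t :=
  LinearMap.BilinForm.dualSubmodule (innerₗ t) Λ

theorem mem_dualLattice {Λ : Submodule ℤ t} {x : t} :
    x ∈ dualLattice Λ ↔ ∀ l ∈ Λ, ∃ n : ℤ, ⟪x, l⟫ = n := by
  simp [dualLattice, LinearMap.BilinForm.mem_dualSubmodule, Submodule.mem_one, eq_comm]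

theorem dualLattice_anti {M Λ : Submodule ℤ t} (h : M ≤ Λ) : dualLattice Λ ≤ dualLattice M :=
  fun _ hx l hl ↦ hx l (h hl)

theorem le_dualLattice_dualLattice (Λ : Submodule ℤ t) : Λ ≤ dualLattice (dualLattice Λ) := by
  simp only [SetLike.le_def, mem_dualLattice]
  exact fun l hl x hx ↦ real_inner_comm l x ▸ hx l hl

/-- The character `x ↦ ⟪x, y⟫ mod 1` of a real inner product space, as an additive function
of `y`. -/
noncomputable def innerCharacter : t →+ (t →ₜ+ UnitAddCircle) :=
  AddMonoidHom.mk'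
    (fun y ↦
      { toFun := fun x ↦ ((⟪x, y⟫ : ℝ) : UnitAddCircle)
        map_zero' := by simp
        map_add' := fun x x' ↦ by rw [inner_add_left, AddCircle.coe_add]
        continuous_toFun := (AddCircle.continuous_mk' 1).comp (by fun_prop) })
    (fun y y' ↦ by
      ext x
      exact (congrArg _ (inner_add_right x y y')).trans (AddCircle.coe_add ..))

theorem innerCharacter_apply (y x : t) : innerCharacter y x = ((⟪x, y⟫ : ℝ) : UnitAddCircle) :=
  rfl

theorem mem_dualLattice_iff_innerCharacter {Λ : Submodule ℤ t} {x : t} :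
    x ∈ dualLattice Λ ↔ ∀ l ∈ Λ, innerCharacter l x = 0 := by
  simp only [mem_dualLattice, innerCharacter_apply, AddCircle.coe_eq_zero_iff, zsmul_one]
  exact forall₂_congr fun l _ ↦ exists_congr fun n ↦ eq_comm

theorem innerCharacter_surjective [CompleteSpace t] :
    Function.Surjective (innerCharacter : t →+ (t →ₜ+ UnitAddCircle)) := by
  intro χ
  obtain ⟨f, hf⟩ := exists_continuousLinearMap_coe_eq χ
  obtain ⟨y, rfl⟩ := (InnerProductSpace.toDual ℝ t).surjective f
  refine ⟨y, ContinuousAddMonoidHom.ext fun x ↦ ?_⟩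
  rw [← hf, innerCharacter_apply, InnerProductSpace.toDual_apply_apply, real_inner_comm]

theorem mem_dualLattice_span {s : Set t} {x : t} (h : ∀ l ∈ s, ∃ n : ℤ, ⟪x, l⟫ = n) :
    x ∈ dualLattice (Submodule.span ℤ s) := by
  refine mem_dualLattice.mpr fun l hl ↦ ?_
  induction hl using Submodule.span_induction with
  | mem l hl => exact h l hl
  | zero => exact ⟨0, by simp⟩
  | add l l' _ _ hl hl' =>
    obtain ⟨n, hn⟩ := hl
    obtain ⟨n', hn'⟩ := hl'
    exact ⟨n + n', by rw [inner_add_right, hn, hn', Int.cast_add]⟩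
  | smul m l _ hl =>
    obtain ⟨n, hn⟩ := hl
    exact ⟨m * n, by rw [← Int.cast_smul_eq_zsmul ℝ, real_inner_smul_right, hn, Int.cast_mul]⟩

theorem orthogonal_span_le_dualLattice (s : Set t) :
    (Submodule.span ℝ s)ᗮ.restrictScalars ℤ ≤ dualLattice (Submodule.span ℤ s) := by
  intro u hu
  refine mem_dualLattice.mpr fun l hl ↦ ⟨0, ?_⟩
  rw [Int.cast_zero]
  exact (Submodule.mem_orthogonal' _ u).mp hu l (Submodule.span_le_restrictScalars ℤ ℝ s hl)

theorem eq_zero_of_forall_mul_eq_intCast {r : ℝ} (h : ∀ c : ℝ, ∃ n : ℤ, c * r = n) : r = 0 := by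
  by_contra hr
  obtain ⟨n, hn⟩ := h (2 * r)⁻¹
  have : 2 * n = 1 := by
    have : 2 * (n : ℝ) = 1 := by rw [← hn]; field_simp
    exact_mod_cast this
  lia

theorem dualLattice_dualLattice_span_le (s : Set t)
    [(Submodule.span ℝ s).HasOrthogonalProjection] :
    dualLattice (dualLattice (Submodule.span ℤ s)) ≤ (Submodule.span ℝ s).restrictScalars ℤ := by
  intro y hy
  rw [Submodule.restrictScalars_mem, ← Submodule.orthogonal_orthogonal (Submodule.span ℝ s),
    Submodule.mem_orthogonal']
  refine fun u hu ↦ eq_zero_of_forall_mul_eq_intCast fun c ↦ ?_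
  rw [← real_inner_smul_right]
  exact mem_dualLattice.mp hy _ (orthogonal_span_le_dualLattice s (Submodule.smul_mem _ c hu))

section Biorthogonal

variable {ι : Type*} {b w : ι → t}

theorem mem_dualLattice_of_biorthogonal [DecidableEq ι]
    (hbw : ∀ i j, ⟪w i, b j⟫ = if i = j then 1 else 0) (i : ι) :
    w i ∈ dualLattice (Submodule.span ℤ (Set.range b)) := by
  refine mem_dualLattice_span ?_
  rintro _ ⟨j, rfl⟩
  exact ⟨if i = j then 1 else 0, by rw [hbw]; push_cast; rfl⟩

theorem exists_biorthogonal_mem_span [Finite ι] [DecidableEq ι] (hb : LinearIndependent ℝ b) :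
    ∃ w : ι → t, (∀ i, w i ∈ Submodule.span ℝ (Set.range b)) ∧
      ∀ i j, ⟪w i, b j⟫ = if i = j then 1 else 0 := by
  let V := Submodule.span ℝ (Set.range b)
  have : FiniteDimensional ℝ V := .span_of_finite ℝ (Set.finite_range b)
  let β : Module.Basis ι ℝ V := Module.Basis.span hb
  let w : ι → V := fun i ↦
    (InnerProductSpace.toDual ℝ V).symm (LinearMap.toContinuousLinearMap (β.coord i))
  refine ⟨fun i ↦ w i, fun i ↦ (w i).2, fun i j ↦ ?_⟩
  calc ⟪(w i : t), b j⟫ = ⟪w i, β j⟫ := by rw [Submodule.coe_inner, Module.Basis.span_apply]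
    _ = if i = j then 1 else 0 := by
      simp [w, InnerProductSpace.toDual_symm_apply, Finsupp.single_apply, eq_comm]

theorem sub_sum_inner_smul_mem_orthogonal [Fintype ι] [DecidableEq ι]
    (hbw : ∀ i j, ⟪w i, b j⟫ = if i = j then 1 else 0) (x : t) :
    x - ∑ i, ⟪x, b i⟫ • w i ∈ (Submodule.span ℝ (Set.range b))ᗮ := by
  refine (Submodule.mem_orthogonal' _ _).mpr fun y hy ↦ ?_
  obtain ⟨c, rfl⟩ := (Submodule.mem_span_range_iff_exists_fun ℝ).mp hy
  simp [inner_sub_left, inner_sum, sum_inner, real_inner_smul_left, real_inner_smul_right, hbw]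

theorem sum_inner_smul_eq_of_mem_span [Fintype ι] [DecidableEq ι]
    (hbw : ∀ i j, ⟪w i, b j⟫ = if i = j then 1 else 0) {y : t}
    (hy : y ∈ Submodule.span ℝ (Set.range b)) : ∑ i, ⟪w i, y⟫ • b i = y := by
  obtain ⟨c, rfl⟩ := (Submodule.mem_span_range_iff_exists_fun ℝ).mp hy
  simp [inner_sum, real_inner_smul_right, hbw]

theorem dualLattice_dualLattice_span_range [Finite ι] (hb : LinearIndependent ℝ b) :
    dualLattice (dualLattice (Submodule.span ℤ (Set.range b))) =
      Submodule.span ℤ (Set.range b) := by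
  classical
  have := Fintype.ofFinite ι
  refine le_antisymm (fun y hy ↦ ?_) (le_dualLattice_dualLattice _)
  have : FiniteDimensional ℝ (Submodule.span ℝ (Set.range b)) :=
    .span_of_finite ℝ (Set.finite_range b)
  obtain ⟨w, -, hbw⟩ := exists_biorthogonal_mem_span hb
  rw [← sum_inner_smul_eq_of_mem_span hbw (dualLattice_dualLattice_span_le _ hy)]
  refine sum_mem fun i _ ↦ ?_
  obtain ⟨n, hn⟩ := mem_dualLattice.mp hy (w i) (mem_dualLattice_of_biorthogonal hbw i)
  rw [real_inner_comm, hn, Int.cast_smul_eq_zsmul]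
  exact Submodule.smul_mem _ _ (Submodule.subset_span ⟨i, rfl⟩)

theorem addMonoidHom_ext_of_biorthogonal [Finite ι] [DecidableEq ι] {G : Type*} [AddCommGroup G]
    (hbw : ∀ i j, ⟪w i, b j⟫ = if i = j then 1 else 0)
    {f g : dualLattice (Submodule.span ℤ (Set.range b)) →+ G}
    (h_orthogonal : ∀ u (hu : u ∈ (Submodule.span ℝ (Set.range b))ᗮ),
      f ⟨u, orthogonal_span_le_dualLattice _ hu⟩ = g ⟨u, orthogonal_span_le_dualLattice _ hu⟩)
    (h_biorthogonal : ∀ i, f ⟨w i, mem_dualLattice_of_biorthogonal hbw i⟩ =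
      g ⟨w i, mem_dualLattice_of_biorthogonal hbw i⟩) :
    f = g := by
  have := Fintype.ofFinite ι
  ext x
  choose n hn using fun i ↦ mem_dualLattice.mp x.2 (b i) (Submodule.subset_span ⟨i, rfl⟩)
  have hu := sub_sum_inner_smul_mem_orthogonal hbw (x : t)
  have hx : x = ⟨_, orthogonal_span_le_dualLattice _ hu⟩ +
      ∑ i, n i • ⟨w i, mem_dualLattice_of_biorthogonal hbw i⟩ := by
    ext
    simp [hn, Int.cast_smul_eq_zsmul]
  rw [hx]
  simp only [map_add, map_sum, map_zsmul, h_orthogonal _ hu, h_biorthogonal]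

theorem exists_innerCharacter_eq_of_linearIndependent [CompleteSpace t] [Finite ι]
    (hb : LinearIndependent ℝ b)
    (χ : dualLattice (Submodule.span ℤ (Set.range b)) →ₜ+ UnitAddCircle) :
    ∃ y : t, ∀ x : dualLattice (Submodule.span ℤ (Set.range b)),
      innerCharacter y (x : t) = χ x := by
  classical
  have := Fintype.ofFinite ι
  obtain ⟨w, hw_span, hbw⟩ := exists_biorthogonal_mem_span hb
  let W := (Submodule.span ℝ (Set.range b))ᗮ
  let incl : W →ₜ+ dualLattice (Submodule.span ℤ (Set.range b)) :=
    { toFun u := ⟨u, orthogonal_span_le_dualLattice _ u.2⟩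
      map_zero' := rfl
      map_add' _ _ := rfl
      continuous_toFun := by fun_prop }
  obtain ⟨z, hz⟩ := innerCharacter_surjective (χ.comp incl)
  choose r hr using fun i ↦
    QuotientAddGroup.mk_surjective (χ ⟨w i, mem_dualLattice_of_biorthogonal hbw i⟩)
  let y : t := z + ∑ i, r i • b i
  refine ⟨y, DFunLike.congr_fun (addMonoidHom_ext_of_biorthogonal hbw
    (f := (innerCharacter y).toAddMonoidHom.comp (AddSubmonoidClass.subtype _))
    (g := χ.toAddMonoidHom) (fun u hu ↦ ?_) fun i ↦ ?_)⟩
  · have hub : ∀ i, ⟪u, b i⟫ = 0 := fun i ↦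
      (Submodule.mem_orthogonal' _ u).mp hu _ (Submodule.subset_span ⟨i, rfl⟩)
    have huy : ⟪u, y⟫ = ⟪u, z⟫ := by
      simp [y, inner_add_right, inner_sum, real_inner_smul_right, hub]
    exact (congrArg _ huy).trans (DFunLike.congr_fun hz ⟨u, hu⟩)
  · have hwz : ⟪w i, (z : t)⟫ = 0 := z.2 _ (hw_span i)
    have hwy : ⟪w i, y⟫ = r i := by
      simp [y, inner_add_right, inner_sum, real_inner_smul_right, hwz, hbw]
    exact (congrArg _ hwy).trans (hr i)

end Biorthogonal

section Discrete

variable (M : Submodule ℤ t) [DiscreteTopology M] [Module.Finite ℤ M]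

theorem dualLattice_dualLattice : dualLattice (dualLattice M) = M := by
  obtain ⟨n, b, hb, rfl⟩ := exists_linearIndependent_span_int_eq M
  exact dualLattice_dualLattice_span_range hb

theorem exists_innerCharacter_eq [CompleteSpace t] (χ : dualLattice M →ₜ+ UnitAddCircle) :
    ∃ y : t, ∀ x : dualLattice M, innerCharacter y (x : t) = χ x := by
  obtain ⟨n, b, hb, rfl⟩ := exists_linearIndependent_span_int_eq M
  exact exists_innerCharacter_eq_of_linearIndependent hb χ

end Discrete

section DualQuotient

variable (Λ M : Submodule ℤ t)

/-- The subgroup `M̂ / Λ̂` of the quotient `t / Λ̂`, with the subspace topology. -/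
noncomputable abbrev dualQuotient : AddSubgroup (t ⧸ (dualLattice Λ).toAddSubgroup) :=
  (dualLattice M).toAddSubgroup.map (QuotientAddGroup.mk' (dualLattice Λ).toAddSubgroup)

/-- The characters of `M̂ / Λ̂` given by the pairing with elements of `Λ`. -/
noncomputable def dualQuotientCharacter :
    Λ.toAddSubgroup →+ (dualQuotient Λ M →ₜ+ UnitAddCircle) :=
  AddMonoidHom.mk'
    (fun l ↦
      { toAddMonoidHom := (QuotientAddGroup.lift _ (innerCharacter (l : t)).toAddMonoidHom
          fun _ hx ↦ (mem_dualLattice_iff_innerCharacter (Λ := Λ)).mp hx (l : t) l.2).comp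
            (dualQuotient Λ M).subtype
        continuous_toFun := (continuous_quot_lift _
          (innerCharacter (l : t)).continuous).comp continuous_subtype_val })
    (fun l l' ↦ by
      ext ⟨_, x, hx, rfl⟩
      exact DFunLike.congr_fun (map_add innerCharacter (l : t) l') x)

theorem ker_dualQuotientCharacter [DiscreteTopology M] [Module.Finite ℤ M] :
    (dualQuotientCharacter Λ M).ker = M.toAddSubgroup.addSubgroupOf Λ.toAddSubgroup := by
  ext l
  calc l ∈ (dualQuotientCharacter Λ M).ker
    _ ↔ ∀ x ∈ dualLattice M, innerCharacter (l : t) x = 0 := by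
      refine ⟨fun hl x hx ↦ DFunLike.congr_fun hl ⟨QuotientAddGroup.mk x, x, hx, rfl⟩,
        fun hl ↦ ?_⟩
      ext ⟨_, x, hx, rfl⟩
      exact hl x hx
    _ ↔ ∀ x ∈ dualLattice M, innerCharacter x (l : t) = 0 := by
      simp only [innerCharacter_apply, real_inner_comm]
    _ ↔ (l : t) ∈ dualLattice (dualLattice M) := mem_dualLattice_iff_innerCharacter.symm
    _ ↔ (l : t) ∈ M := by rw [dualLattice_dualLattice]

variable {Λ M}

theorem dualQuotientCharacter_surjective [CompleteSpace t] [DiscreteTopology Λ] [Module.Finite ℤ Λ]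
    [DiscreteTopology M] [Module.Finite ℤ M] (h : M ≤ Λ) :
    Function.Surjective (dualQuotientCharacter Λ M) := by
  intro χ
  let q : dualLattice M →ₜ+ dualQuotient Λ M :=
    { toFun x := ⟨QuotientAddGroup.mk (x : t), x, x.2, rfl⟩
      map_zero' := rfl
      map_add' _ _ := rfl
      continuous_toFun := .subtype_mk (continuous_quot_mk.comp continuous_subtype_val) _ }
  obtain ⟨l, hl⟩ := exists_innerCharacter_eq M (χ.comp q)
  have hlΛ : l ∈ Λ := by
    rw [← dualLattice_dualLattice Λ, mem_dualLattice_iff_innerCharacter]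
    intro x hx
    have hqx : q ⟨x, dualLattice_anti h hx⟩ = 0 :=
      Subtype.ext ((QuotientAddGroup.eq_zero_iff x).mpr hx)
    calc innerCharacter x l = innerCharacter l x := by
          rw [innerCharacter_apply, innerCharacter_apply, real_inner_comm]
      _ = χ (q ⟨x, dualLattice_anti h hx⟩) := hl ⟨x, dualLattice_anti h hx⟩
      _ = 0 := by rw [hqx, map_zero]
  refine ⟨⟨l, hlΛ⟩, ?_⟩
  ext ⟨_, x, hx, rfl⟩
  exact hl ⟨x, hx⟩

/-- The isomorphism `Λ / M ≃ Hom(M̂ / Λ̂, ℝ/ℤ)` induced by the inner product, for finitely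
generated discrete subgroups `M ≤ Λ` of a Hilbert space. -/
noncomputable def quotientEquivDualQuotientCharacters [CompleteSpace t] [DiscreteTopology Λ]
    [Module.Finite ℤ Λ] (h : M ≤ Λ) :
    Λ.toAddSubgroup ⧸ M.toAddSubgroup.addSubgroupOf Λ.toAddSubgroup ≃+
      (dualQuotient Λ M →ₜ+ UnitAddCircle) :=
  have : DiscreteTopology M := DiscreteTopology.of_subset ‹DiscreteTopology Λ› h
  have : Module.Finite ℤ M := Module.Finite.of_injective (Submodule.inclusion h)
    (Submodule.inclusion_injective h)
  (QuotientAddGroup.quotientAddEquivOfEq (ker_dualQuotientCharacter Λ M).symm).trans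
    (QuotientAddGroup.quotientKerEquivOfSurjective _ (dualQuotientCharacter_surjective h))

end DualQuotient

section Isometry

variable {Λ : Submodule ℤ t} {L : t →ₗᵢ[ℝ] t} {F : t →ₗ[ℝ] t}

theorem map_sub_id_le (hL : L '' (Λ : Set t) = Λ) (hF : ∀ x, F x = L x - x) :
    Λ.map (F.restrictScalars ℤ) ≤ Λ := by
  rintro _ ⟨l, hl, rfl⟩
  rw [LinearMap.restrictScalars_apply, hF]
  exact Λ.sub_mem (hL.le ⟨l, hl, rfl⟩) hl

theorem inner_sub_id_apply (hF : ∀ x, F x = L x - x) (x y : t) : ⟪F x, L y⟫ = -⟪x, F y⟫ := by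
  rw [hF, hF, inner_sub_left, inner_sub_right, L.inner_map_map, neg_sub]

theorem comap_sub_id_dualLattice (hL : L '' (Λ : Set t) = Λ) (hF : ∀ x, F x = L x - x) :
    (dualLattice Λ).comap (F.restrictScalars ℤ) = dualLattice (Λ.map (F.restrictScalars ℤ)) := by
  ext x
  calc F x ∈ dualLattice Λ
    _ ↔ ∀ l ∈ (Λ : Set t), innerCharacter l (F x) = 0 := mem_dualLattice_iff_innerCharacter
    _ ↔ ∀ l ∈ (Λ : Set t), innerCharacter (L l) (F x) = 0 := by
      conv_lhs => rw [← hL, Set.forall_mem_image]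
    _ ↔ ∀ l ∈ (Λ : Set t), innerCharacter (F l) x = 0 := by
      simp only [innerCharacter_apply, inner_sub_id_apply hF, AddCircle.coe_neg, neg_eq_zero]
    _ ↔ ∀ m ∈ F '' (Λ : Set t), innerCharacter m x = 0 := by rw [Set.forall_mem_image]
    _ ↔ x ∈ dualLattice (Λ.map (F.restrictScalars ℤ)) :=
      (mem_dualLattice_iff_innerCharacter (Λ := Λ.map (F.restrictScalars ℤ))).symm

end Isometry

end InnerProductSpace

theorem stmt_5_general {t : Type*} [NormedAddCommGroup t] [InnerProductSpace ℝ t]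
    [CompleteSpace t] (Λ : Submodule ℤ t) [DiscreteTopology Λ] [Module.Finite ℤ Λ]
    (L : t →ₗᵢ[ℝ] t) (hL : ⇑L '' (Λ : Set t) = (Λ : Set t))
    (F : t →ₗ[ℝ] t) (hF : ∀ x, F x = L x - x)
    (Λhat : Submodule ℤ t)
    (hΛhat : ∀ x : t, x ∈ Λhat ↔ ∀ l ∈ Λ, ∃ n : ℤ, ⟪x, l⟫ = (n : ℝ)) :
    Nonempty
      ((Λ.toAddSubgroup ⧸
          (AddSubgroup.map F.toAddMonoidHom Λ.toAddSubgroup).addSubgroupOf Λ.toAddSubgroup) ≃+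
        ContinuousAddMonoidHom
          (AddSubgroup.map (QuotientAddGroup.mk' Λhat.toAddSubgroup)
            (Λhat.toAddSubgroup.comap F.toAddMonoidHom))
          (AddCircle (1 : ℝ))) := by
  obtain rfl : Λhat = dualLattice Λ := by
    ext x
    rw [hΛhat, mem_dualLattice]
  have hcomap : (dualLattice Λ).toAddSubgroup.comap F.toAddMonoidHom =
      (dualLattice (Λ.map (F.restrictScalars ℤ))).toAddSubgroup :=
    congrArg Submodule.toAddSubgroup (comap_sub_id_dualLattice hL hF)
  have hmap : Λ.toAddSubgroup.map F.toAddMonoidHom =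
      (Λ.map (F.restrictScalars ℤ)).toAddSubgroup := rfl
  rw [hcomap, hmap]
  exact ⟨quotientEquivDualQuotientCharacters (map_sub_id_le hL hF)⟩

/-- There is a group isomorphism between `Λ/F(Λ)` and the group of
continuous group homomorphisms from `F⁻¹(Λ̂)/Λ̂` (with the subspace topology inside the
torus `t/Λ̂`) to the circle `ℝ/ℤ`. -/
theorem stmt_5 {t : Type*} [NormedAddCommGroup t] [InnerProductSpace ℝ t]
    [FiniteDimensional ℝ t]
    (Λ : Submodule ℤ t) [DiscreteTopology Λ]
    (hspan : Submodule.span ℝ (Λ : Set t) = ⊤)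
    (L : t ≃ₗᵢ[ℝ] t) (hL : ⇑L '' (Λ : Set t) = (Λ : Set t))
    (F : t →ₗ[ℝ] t) (hF : ∀ x, F x = L x - x)
    (Λhat : Submodule ℤ t)
    (hΛhat : ∀ x : t, x ∈ Λhat ↔ ∀ l ∈ Λ, ∃ n : ℤ, ⟪x, l⟫ = (n : ℝ)) :
    Nonempty
      ((Λ.toAddSubgroup ⧸
          (AddSubgroup.map F.toAddMonoidHom Λ.toAddSubgroup).addSubgroupOf Λ.toAddSubgroup) ≃+
        ContinuousAddMonoidHom
          (AddSubgroup.map (QuotientAddGroup.mk' Λhat.toAddSubgroup)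
            (Λhat.toAddSubgroup.comap F.toAddMonoidHom))
          (AddCircle (1 : ℝ))) := by
  have := FiniteDimensional.complete ℝ t
  exact stmt_5_general Λ L.toLinearIsometry hL F hF Λhat hΛhat
end

section
/- The finite abelian group Tor(Λ/F(Λ)) is isomorphic to the group Hom(Tor(Λ̂/F(Λ̂)), ℚ/ℤ) of homomorphisms from Tor(Λ̂/F(Λ̂)) to ℚ/ℤ; in particular, the finite abelian groups Tor(Λ/F(Λ)) and Tor(Λ̂/F(Λ̂)) are isomorphic. -/
open scoped RealInnerProductSpace

/-!
The inner product identifies `Λ̂` with the `ℤ`-dual of `Λ`, and for an endomorphism `F` of `Λ` it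
identifies the adjoint `F*` on `Λ̂` with the transpose of `F`. By the Smith normal form, `F` and its
transpose are represented by the same diagonal matrix in suitable pairs of bases, whence
`Λ/F(Λ) ≃ Λ̂/F*(Λ̂)`. If `F = L - 1` with `L` orthogonal, then `F* ∘ L = -F`, so that
`F*(Λ̂) = F(Λ̂)` as soon as `L(Λ̂) = Λ̂`. The comparison with `Hom(-, ℚ/ℤ)` is the self-duality of
finite abelian groups.
-/

open Module
open LinearMap (BilinForm IsAdjointPair)

section AddCircle

variable {𝕜 : Type*} [Field 𝕜] [LinearOrder 𝕜] [IsStrictOrderedRing 𝕜] (p : 𝕜) [Fact (0 < p)]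

theorem hasEnoughRootsOfUnity_addCircle (n : ℕ) [NeZero n] :
    HasEnoughRootsOfUnity (Multiplicative (AddCircle p)) n := by
  have hζ : IsPrimitiveRoot (Multiplicative.ofAdd ((p / n : 𝕜) : AddCircle p)) n :=
    IsPrimitiveRoot.iff_orderOf.mpr (AddCircle.addOrderOf_period_div (NeZero.pos n))
  refine ⟨⟨_, hζ⟩, ⟨⟨hζ.toRootsOfUnity, fun u ↦ ?_⟩⟩⟩
  have hu : n • (u : (Multiplicative (AddCircle p))ˣ).val.toAdd = 0 :=
    congrArg (fun v ↦ v.val.toAdd) u.2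
  obtain ⟨m, -, hm⟩ := (AddCircle.nsmul_eq_zero_iff (NeZero.pos n)).mp hu
  rw [AddCircle.natCast_div_mul_eq_nsmul] at hm
  exact ⟨m, by ext; simpa using hm⟩

theorem nonempty_addEquiv_addMonoidHom_addCircle (A : Type*) [AddCommGroup A] [Finite A] :
    Nonempty (A ≃+ (A →+ AddCircle p)) := by
  have : NeZero (Monoid.exponent (Multiplicative A)) := ⟨Monoid.exponent_ne_zero_of_finite⟩
  have := hasEnoughRootsOfUnity_addCircle p (Monoid.exponent (Multiplicative A))
  obtain ⟨e⟩ := CommGroup.monoidHom_mulEquiv_of_hasEnoughRootsOfUnity (Multiplicative A)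
    (Multiplicative (AddCircle p))
  let dropUnits := (toUnits (G := Multiplicative (AddCircle p))).symm.monoidHomCongrRight
    (M := Multiplicative A)
  let e' := e.symm.trans dropUnits
  exact ⟨.mk' ((Multiplicative.ofAdd.trans e'.toEquiv).trans AddMonoidHom.toMultiplicative.symm)
    fun a b ↦ by ext x; simp⟩

end AddCircle

section Torsion

variable {A B : Type*} [AddCommGroup A] [AddCommGroup B]

theorem finite_torsion_of_finite_int [Module.Finite ℤ A] : Finite (AddCommGroup.torsion A) := by
  have : Module.Finite ℤ (AddCommGroup.torsion A) :=
    inferInstanceAs (Module.Finite ℤ (AddCommGroup.torsion A).toIntSubmodule)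
  have : AddGroup.FG (AddCommGroup.torsion A) := Module.Finite.iff_addGroup_fg.mp this
  exact AddCommGroup.finite_of_fg_isAddTorsion _ AddCommMonoid.addTorsion.isAddTorsion

/-- The isomorphism of torsion subgroups induced by an isomorphism of abelian groups. -/
def torsionCongr (e : A ≃+ B) : AddCommGroup.torsion A ≃+ AddCommGroup.torsion B :=
  (e.addSubgroupMap _).trans (AddEquiv.addSubgroupCongr e.map_torsion)

end Torsion

section Cokernel

variable {R M N : Type*} [CommRing R] [AddCommGroup M] [Module R M] [AddCommGroup N] [Module R N]

theorem map_range_eq_range_of_comp_eq_comp {M' N' : Type*} [AddCommGroup M'] [Module R M']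
    [AddCommGroup N'] [Module R N'] {e' : M ≃ₗ[R] M'} {e : N ≃ₗ[R] N'} {f : M →ₗ[R] N}
    {g : M' →ₗ[R] N'} (h : e.toLinearMap ∘ₗ f = g ∘ₗ e'.toLinearMap) :
    (LinearMap.range f).map e.toLinearMap = LinearMap.range g := by
  rw [← LinearMap.range_comp, h, LinearMap.range_comp_of_range_eq_top _ e'.range]

variable [IsDomain R] [IsPrincipalIdealRing R]

theorem exists_basis_apply_eq_smul {ι : Type*} [Finite ι] (c : Basis ι R M) (c' : Basis ι R N)
    (f : M →ₗ[R] N) :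
    ∃ (b : Basis ι R M) (b' : Basis ι R N) (d : ι → R), ∀ i, f (b i) = d i • b' i := by
  obtain ⟨n, snf⟩ := Submodule.smithNormalForm c' (LinearMap.range f)
  obtain ⟨k, kerBasis⟩ := Submodule.basisOfPid c (LinearMap.ker f)
  let a : Basis (Fin k ⊕ Fin n) R M := kerBasis.sumQuot (snf.bN.map f.quotKerEquivRange.symm)
  have hker (j : Fin k) : f (a (.inl j)) = 0 := by simp [a]
  have hrange (j : Fin n) : f (a (.inr j)) = snf.a j • snf.bM (snf.f j) := by
    rw [← snf.snf, ← f.quotKerEquivRange_apply_mk]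
    simp [a]
  let e : Fin k ⊕ Fin n ≃ ι := a.indexEquiv c
  obtain ⟨σ, hσ⟩ := Equiv.Perm.exists_extending_pair (e ∘ Sum.inr) snf.f
    (e.injective.comp Sum.inr_injective) snf.f.injective
  refine ⟨a.reindex e, snf.bM.reindex σ.symm, Sum.elim 0 snf.a ∘ e.symm, fun i ↦ ?_⟩
  obtain ⟨j | j, rfl⟩ := e.surjective i
  · simp [hker]
  · simp [hrange, ← hσ]

variable [Module.Free R M] [Module.Finite R M] [Module.Free R N] [Module.Finite R N]

theorem exists_linearEquiv_dual_comp_eq_dualMap_comp (h : finrank R M = finrank R N)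
    (f : M →ₗ[R] N) :
    ∃ (e : N ≃ₗ[R] Dual R M) (e' : M ≃ₗ[R] Dual R N),
      e.toLinearMap ∘ₗ f = f.dualMap ∘ₗ e'.toLinearMap := by
  obtain ⟨b, b', d, hd⟩ := exists_basis_apply_eq_smul (finBasisOfFinrankEq R M h)
    (finBasis R N) f
  refine ⟨b'.equiv b.dualBasis (.refl _), b.equiv b'.dualBasis (.refl _),
    b.ext fun i ↦ b.ext fun j ↦ ?_⟩
  by_cases hij : i = j <;> simp [hd, hij]

theorem nonempty_quotient_range_equiv_quotient_range_dualMap (h : finrank R M = finrank R N)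
    (f : M →ₗ[R] N) :
    Nonempty ((N ⧸ LinearMap.range f) ≃ₗ[R] (Dual R M ⧸ LinearMap.range f.dualMap)) := by
  obtain ⟨e, e', he⟩ := exists_linearEquiv_dual_comp_eq_dualMap_comp h f
  exact ⟨Submodule.Quotient.equiv _ _ e (map_range_eq_range_of_comp_eq_comp he)⟩

end Cokernel

section DualSubmodule

variable {R K V : Type*} [CommRing R] [Field K] [Algebra R K] [AddCommGroup V] [Module R V]
  [Module K V] [IsScalarTower R K V] {B : BilinForm K V} {N : Submodule R V}

theorem image_dualSubmodule_eq_of_image_eq {L : V ≃ V} (hB : ∀ x y, B (L x) (L y) = B x y)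
    (hL : L '' (N : Set V) = N) : L '' (B.dualSubmodule N : Set V) = B.dualSubmodule N := by
  have hpreimage : L ⁻¹' (B.dualSubmodule N : Set V) = B.dualSubmodule N := by
    ext x
    calc (∀ y ∈ (N : Set V), B (L x) y ∈ (1 : Submodule R K))
      _ ↔ ∀ y ∈ L '' (N : Set V), B (L x) y ∈ (1 : Submodule R K) := by rw [hL]
      _ ↔ ∀ y ∈ (N : Set V), B x y ∈ (1 : Submodule R K) := by
        simp only [Set.forall_mem_image, hB]
  conv_lhs => rw [← hpreimage, L.image_preimage]

theorem apply_mem_dualSubmodule_of_isAdjointPair {F G : V →ₗ[K] V} (hFG : IsAdjointPair B B G F)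
    (hF : ∀ x ∈ N, F x ∈ N) : ∀ x ∈ B.dualSubmodule N, G x ∈ B.dualSubmodule N :=
  fun x hx y hy ↦ hFG x y ▸ hx _ (hF y hy)

variable [IsDomain R] [IsTorsionFree R K] {ι : Type*} [Finite ι]

theorem dualSubmoduleToDual_bijective (hB : B.Nondegenerate) (b : Basis ι K V)
    (hb : Submodule.span R (Set.range b) = N) :
    Function.Bijective (B.dualSubmoduleToDual N) := by
  subst hb
  have := b.finiteDimensional_of_finite
  have hspan : Submodule.span K (Submodule.span R (Set.range b) : Set V) = ⊤ := by
    rw [Submodule.span_span_of_tower, b.span_eq]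
  refine ⟨B.dualSubmoduleToDual_injective hB _ hspan, fun φ ↦ ?_⟩
  let c := b.restrictScalars R
  let x : V := (B.toDual hB).symm (b.constr K fun i ↦ algebraMap R K (φ (c i)))
  have hx (y : Submodule.span R (Set.range b)) : B x y = algebraMap R K (φ y) := by
    have hcomp : (B x).restrictScalars R ∘ₗ Submodule.subtype _ = Algebra.linearMap R K ∘ₗ φ :=
      c.ext fun i ↦ by simp [x, c, BilinForm.apply_toDual_symm_apply]
    exact LinearMap.congr_fun hcomp y
  have hx_mem : x ∈ B.dualSubmodule (Submodule.span R (Set.range b)) :=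
    fun y hy ↦ Submodule.mem_one.mpr ⟨_, (hx ⟨y, hy⟩).symm⟩
  refine ⟨⟨x, hx_mem⟩, LinearMap.ext fun y ↦ FaithfulSMul.algebraMap_injective R K ?_⟩
  exact (B.dualSubmoduleParing_spec ⟨x, hx_mem⟩ y).trans (hx y)

theorem nonempty_quotient_map_equiv_of_isAdjointPair [IsPrincipalIdealRing R]
    (hB : B.Nondegenerate) (b : Basis ι K V) (hb : Submodule.span R (Set.range b) = N)
    {F G : V →ₗ[K] V} (hFG : IsAdjointPair B B G F) (hF : ∀ x ∈ N, F x ∈ N) :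
    Nonempty ((N ⧸ (N.map (F.restrictScalars R)).submoduleOf N) ≃ₗ[R]
      (B.dualSubmodule N ⧸
        ((B.dualSubmodule N).map (G.restrictScalars R)).submoduleOf (B.dualSubmodule N))) := by
  have hG := apply_mem_dualSubmodule_of_isAdjointPair hFG hF
  let D := LinearEquiv.ofBijective _ (dualSubmoduleToDual_bijective hB b hb)
  let f : N →ₗ[R] N := (F.restrictScalars R).restrict hF
  let g : B.dualSubmodule N →ₗ[R] B.dualSubmodule N := (G.restrictScalars R).restrict hG
  have hf : LinearMap.range f = (N.map _).submoduleOf N := LinearMap.range_restrict _ hF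
  have hg : LinearMap.range g = ((B.dualSubmodule N).map _).submoduleOf (B.dualSubmodule N) :=
    LinearMap.range_restrict _ hG
  have hD : D.toLinearMap ∘ₗ g = f.dualMap ∘ₗ D.toLinearMap := by
    ext x y
    apply FaithfulSMul.algebraMap_injective R K
    calc algebraMap R K (B.dualSubmoduleParing (g x) y)
      _ = B (G x) y := B.dualSubmoduleParing_spec _ _
      _ = B x (F y) := hFG _ _
      _ = algebraMap R K (B.dualSubmoduleParing x (f y)) :=
        (B.dualSubmoduleParing_spec x (f y)).symm
  subst hb
  have := Module.Free.of_basis (b.restrictScalars R)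
  have := Module.Finite.of_basis (b.restrictScalars R)
  obtain ⟨e⟩ := nonempty_quotient_range_equiv_quotient_range_dualMap rfl f
  rw [← hf, ← hg]
  exact ⟨e.trans (Submodule.Quotient.equiv _ _ D (map_range_eq_range_of_comp_eq_comp hD)).symm⟩

end DualSubmodule

section Lattice

variable {t : Type*} [NormedAddCommGroup t] [InnerProductSpace ℝ t]

theorem nondegenerate_innerₗ : (innerₗ t).Nondegenerate :=
  ⟨fun _ hx ↦ inner_self_eq_zero.mp (hx _), fun _ hx ↦ inner_self_eq_zero.mp (hx _)⟩

theorem eq_dualSubmodule_innerₗ {Λ Λhat : Submodule ℤ t}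
    (hΛhat : ∀ x : t, x ∈ Λhat ↔ ∀ l ∈ Λ, ∃ n : ℤ, ⟪x, l⟫ = (n : ℝ)) :
    Λhat = BilinForm.dualSubmodule (innerₗ t) Λ := by
  ext x
  simp [hΛhat, BilinForm.mem_dualSubmodule, Submodule.mem_one, eq_comm]

variable [FiniteDimensional ℝ t]

theorem nonempty_quotient_map_equiv_quotient_map_adjoint {Λ : Submodule ℤ t} [DiscreteTopology Λ]
    (hspan : Submodule.span ℝ (Λ : Set t) = ⊤) {F : t →ₗ[ℝ] t} (hF : ∀ x ∈ Λ, F x ∈ Λ)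
    {Λhat : Submodule ℤ t} (hΛhat : ∀ x, x ∈ Λhat ↔ ∀ l ∈ Λ, ∃ n : ℤ, ⟪x, l⟫ = (n : ℝ)) :
    Nonempty ((Λ ⧸ (Λ.map (F.restrictScalars ℤ)).submoduleOf Λ) ≃ₗ[ℤ]
      (Λhat ⧸ (Λhat.map (F.adjoint.restrictScalars ℤ)).submoduleOf Λhat)) := by
  obtain rfl := eq_dualSubmodule_innerₗ hΛhat
  have : IsZLattice ℝ Λ := ⟨hspan⟩
  have := ZLattice.module_free ℝ Λ
  exact nonempty_quotient_map_equiv_of_isAdjointPair nondegenerate_innerₗ _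
    ((Module.Free.chooseBasis ℤ Λ).ofZLatticeBasis_span ℝ Λ)
    (fun x y ↦ F.adjoint_inner_left y x) hF

theorem stmt_7_general (Λ : Submodule ℤ t) [DiscreteTopology Λ]
    (hspan : Submodule.span ℝ (Λ : Set t) = ⊤)
    (F : t →ₗ[ℝ] t) (hF : ∀ x ∈ Λ, F x ∈ Λ)
    (Λhat : Submodule ℤ t)
    (hΛhat : ∀ x : t, x ∈ Λhat ↔ ∀ l ∈ Λ, ∃ n : ℤ, ⟪x, l⟫ = (n : ℝ)) :
    Nonempty
      ((AddCommGroup.torsion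
          (Λ.toAddSubgroup ⧸
            (AddSubgroup.map F.toAddMonoidHom Λ.toAddSubgroup).addSubgroupOf
              Λ.toAddSubgroup)) ≃+
        ((AddCommGroup.torsion
            (Λhat.toAddSubgroup ⧸
              (AddSubgroup.map F.adjoint.toAddMonoidHom Λhat.toAddSubgroup).addSubgroupOf
                Λhat.toAddSubgroup)) →+ AddCircle (1 : ℚ))) ∧
    Nonempty
      ((AddCommGroup.torsion
          (Λ.toAddSubgroup ⧸
            (AddSubgroup.map F.toAddMonoidHom Λ.toAddSubgroup).addSubgroupOf
              Λ.toAddSubgroup)) ≃+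
        (AddCommGroup.torsion
          (Λhat.toAddSubgroup ⧸
            (AddSubgroup.map F.adjoint.toAddMonoidHom Λhat.toAddSubgroup).addSubgroupOf
              Λhat.toAddSubgroup))) := by
  obtain ⟨e⟩ := nonempty_quotient_map_equiv_quotient_map_adjoint hspan hF hΛhat
  have := Module.Finite.equiv e
  let Q := Λhat ⧸ (Λhat.map (F.adjoint.restrictScalars ℤ)).submoduleOf Λhat
  have := finite_torsion_of_finite_int (A := Q)
  obtain ⟨pontryagin⟩ :=
    nonempty_addEquiv_addMonoidHom_addCircle (1 : ℚ) (AddCommGroup.torsion Q)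
  exact ⟨⟨(torsionCongr e.toAddEquiv).trans pontryagin⟩, ⟨torsionCongr e.toAddEquiv⟩⟩

variable {L : t ≃ₗᵢ[ℝ] t} {F : t →ₗ[ℝ] t}

theorem adjoint_apply_eq_neg_of_eq_isometry_sub_id (hF : ∀ x, F x = L x - x) (x : t) :
    F.adjoint (L x) = -F x := by
  refine ext_inner_right ℝ fun y ↦ ?_
  rw [F.adjoint_inner_left, hF, hF, inner_sub_right, L.inner_map_map, inner_neg_left,
    inner_sub_left, neg_sub]

theorem map_adjoint_eq_map_of_eq_isometry_sub_id (hF : ∀ x, F x = L x - x) {A : AddSubgroup t}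
    (hA : L '' (A : Set t) = A) :
    A.map F.adjoint.toAddMonoidHom = A.map F.toAddMonoidHom := by
  apply SetLike.coe_injective
  calc F.adjoint '' (A : Set t)
    _ = F.adjoint '' (L '' A) := by rw [hA]
    _ = F '' (-A) := by
      simp only [Set.image_image, adjoint_apply_eq_neg_of_eq_isometry_sub_id hF,
        ← Set.image_neg_eq_neg, map_neg]
    _ = F '' A := by rw [neg_coe_set]

end Lattice

/-- `Tor(Λ/F(Λ))` is isomorphic to `Hom(Tor(Λ̂/F(Λ̂)), ℚ/ℤ)`; in particular
the finite abelian groups `Tor(Λ/F(Λ))` and `Tor(Λ̂/F(Λ̂))` are isomorphic. -/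
theorem stmt_7 {t : Type*} [NormedAddCommGroup t] [InnerProductSpace ℝ t]
    [FiniteDimensional ℝ t]
    (Λ : Submodule ℤ t) [DiscreteTopology Λ]
    (hspan : Submodule.span ℝ (Λ : Set t) = ⊤)
    (L : t ≃ₗᵢ[ℝ] t) (hL : ⇑L '' (Λ : Set t) = (Λ : Set t))
    (F : t →ₗ[ℝ] t) (hF : ∀ x, F x = L x - x)
    (Λhat : Submodule ℤ t)
    (hΛhat : ∀ x : t, x ∈ Λhat ↔ ∀ l ∈ Λ, ∃ n : ℤ, ⟪x, l⟫ = (n : ℝ)) :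
    Nonempty
      ((AddCommGroup.torsion
          (Λ.toAddSubgroup ⧸
            (AddSubgroup.map F.toAddMonoidHom Λ.toAddSubgroup).addSubgroupOf
              Λ.toAddSubgroup)) ≃+
        ((AddCommGroup.torsion
            (Λhat.toAddSubgroup ⧸
              (AddSubgroup.map F.toAddMonoidHom Λhat.toAddSubgroup).addSubgroupOf
                Λhat.toAddSubgroup)) →+ AddCircle (1 : ℚ))) ∧
    Nonempty
      ((AddCommGroup.torsion
          (Λ.toAddSubgroup ⧸
            (AddSubgroup.map F.toAddMonoidHom Λ.toAddSubgroup).addSubgroupOf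
              Λ.toAddSubgroup)) ≃+
        (AddCommGroup.torsion
          (Λhat.toAddSubgroup ⧸
            (AddSubgroup.map F.toAddMonoidHom Λhat.toAddSubgroup).addSubgroupOf
              Λhat.toAddSubgroup))) := by
  have hL_dual : L '' (Λhat : Set t) = Λhat := by
    obtain rfl := eq_dualSubmodule_innerₗ hΛhat
    exact image_dualSubmodule_eq_of_image_eq (L := L.toEquiv) L.inner_map_map hL
  have hF_mem (x) (hx : x ∈ Λ) : F x ∈ Λ :=
    hF x ▸ sub_mem (hL.subset (Set.mem_image_of_mem L hx)) hx
  rw [← map_adjoint_eq_map_of_eq_isometry_sub_id hF (A := Λhat.toAddSubgroup) hL_dual]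
  exact stmt_7_general Λ hspan F hF_mem Λhat hΛhat
end
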